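/- (Theorem 1, second part) For all r, σ > 0 and γ > 0, the MI-ISAC Fisher information matrix J is positive definite, and the joint estimation penalties Δ_r = J₁₁·(J⁻¹)₁₁ and Δ_σ = J₂₂·(J⁻¹)₂₂ satisfy Δ_r = Δ_σ = 1/(1 − ρ²) ≥ 1, where ρ = J₁₂/√(J₁₁·J₂₂). -/

import Mathlib

/-!
The Fisher matrix is a multiple of a Gram matrix: `J = γ Bᵀ B`, where the rows `(β, α r / (2 σ))`
and `(α, α r / (2 σ))` of `B` are, up to sign, the gradients in `(r, σ)` of the log-amplitude and
the phase of the channel `r⁻³ exp (-(1 + i) α r)`. Since `β - α = 3 / r`, we get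
`det B = 3 α / (2 σ)`, so `J` is positive definite: it is the near-field factor `r⁻³` that separates
the two parameters.

By Cramer's rule, both penalties of a `2 × 2` matrix equal `J₁₁ J₂₂ / det J`, and for symmetric `J`
this is the reciprocal of `1 - ρ²`.
-/

open Matrix Real

/-- Field attenuation constant `α(σ) = √(π f₀ μ₀ σ)`. -/
noncomputable def miAlpha (f₀ μ₀ σ : ℝ) : ℝ := Real.sqrt (Real.pi * f₀ * μ₀ * σ)

/-- `β(r,σ) = 3/r + α(σ)`. -/
noncomputable def miBeta (f₀ μ₀ r σ : ℝ) : ℝ := 3 / r + miAlpha f₀ μ₀ σ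

/-- The MI-ISAC Fisher information matrix for joint range–conductivity estimation. -/
noncomputable def miFIM (f₀ μ₀ r σ γ : ℝ) : Matrix (Fin 2) (Fin 2) ℝ :=
  !![γ * (miBeta f₀ μ₀ r σ ^ 2 + miAlpha f₀ μ₀ σ ^ 2),
     γ * miAlpha f₀ μ₀ σ * r * (miBeta f₀ μ₀ r σ + miAlpha f₀ μ₀ σ) / (2 * σ);
     γ * miAlpha f₀ μ₀ σ * r * (miBeta f₀ μ₀ r σ + miAlpha f₀ μ₀ σ) / (2 * σ),
     γ * miAlpha f₀ μ₀ σ ^ 2 * r ^ 2 / (2 * σ ^ 2)]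

section EstimationPenalty

variable {n : Type*}

/-- The correlation coefficient `J i j / √(J i i * J j j)` of two parameters with respect to an
information matrix `J`. -/
noncomputable def fisherCorrelation (J : Matrix n n ℝ) (i j : n) : ℝ :=
  J i j / Real.sqrt (J i i * J j j)

/-- The joint estimation penalty of the parameter `i`: the ratio of the Cramér–Rao bound `J⁻¹ i i`,
valid when all parameters are unknown, to the bound `(J i i)⁻¹`, valid when only `i` is unknown. -/
noncomputable def estimationPenalty [Fintype n] [DecidableEq n] (J : Matrix n n ℝ) (i : n) : ℝ :=
  J i i * J⁻¹ i i

lemma sq_fisherCorrelation {J : Matrix n n ℝ} {i j : n} (h : 0 ≤ J i i * J j j) :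
    fisherCorrelation J i j ^ 2 = J i j ^ 2 / (J i i * J j j) := by
  rw [fisherCorrelation, div_pow, Real.sq_sqrt h]

lemma diag_mul_inv_diag_fin_two {K : Type*} [Field K] (A : Matrix (Fin 2) (Fin 2) K) (i : Fin 2) :
    A i i * A⁻¹ i i = A 0 0 * A 1 1 / A.det := by
  rw [Matrix.inv_def, Ring.inverse_eq_inv', Matrix.smul_apply, smul_eq_mul, Matrix.adjugate_fin_two]
  fin_cases i
  · change A 0 0 * (A.det⁻¹ * A 1 1) = _
    ring
  · change A 1 1 * (A.det⁻¹ * A 0 0) = _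
    ring

variable {J : Matrix (Fin 2) (Fin 2) ℝ}

lemma one_sub_sq_fisherCorrelation_fin_two (hJ : J.IsSymm) (h : 0 < J 0 0 * J 1 1) :
    1 - fisherCorrelation J 0 1 ^ 2 = J.det / (J 0 0 * J 1 1) := by
  rw [sq_fisherCorrelation h.le, one_sub_div h.ne', Matrix.det_fin_two, hJ.apply 0 1, sq]

lemma one_sub_sq_fisherCorrelation_of_posDef (hJ : J.PosDef) :
    1 - fisherCorrelation J 0 1 ^ 2 = J.det / (J 0 0 * J 1 1) :=
  one_sub_sq_fisherCorrelation_fin_two hJ.isHermitian (mul_pos hJ.diag_pos hJ.diag_pos)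

lemma estimationPenalty_eq_of_posDef (hJ : J.PosDef) (i : Fin 2) :
    estimationPenalty J i = 1 / (1 - fisherCorrelation J 0 1 ^ 2) := by
  rw [estimationPenalty, diag_mul_inv_diag_fin_two, one_sub_sq_fisherCorrelation_of_posDef hJ,
    one_div_div]

lemma one_le_one_div_one_sub_sq_fisherCorrelation (hJ : J.PosDef) :
    1 ≤ 1 / (1 - fisherCorrelation J 0 1 ^ 2) := by
  have hpos : 0 < 1 - fisherCorrelation J 0 1 ^ 2 := by
    rw [one_sub_sq_fisherCorrelation_of_posDef hJ]
    exact div_pos hJ.det_pos (mul_pos hJ.diag_pos hJ.diag_pos)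
  exact one_le_one_div hpos (sub_le_self 1 (sq_nonneg _))

end EstimationPenalty

section FisherMatrix

variable {f₀ μ₀ r σ γ : ℝ}

/-- The sensitivities of the log-amplitude (first row) and the phase (second row) of the
magnetic-induction channel to the range and the conductivity, with the common sign dropped. -/
noncomputable def miSensitivity (f₀ μ₀ r σ : ℝ) : Matrix (Fin 2) (Fin 2) ℝ :=
  !![miBeta f₀ μ₀ r σ, miAlpha f₀ μ₀ σ * r / (2 * σ);
     miAlpha f₀ μ₀ σ, miAlpha f₀ μ₀ σ * r / (2 * σ)]

lemma miFIM_eq_smul_conjTranspose_mul_self (f₀ μ₀ r σ γ : ℝ) :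
    miFIM f₀ μ₀ r σ γ = γ • ((miSensitivity f₀ μ₀ r σ)ᴴ * miSensitivity f₀ μ₀ r σ) := by
  ext i j
  simp only [Matrix.smul_apply, smul_eq_mul, Matrix.mul_apply, Matrix.conjTranspose_apply,
    star_trivial, Fin.sum_univ_two]
  fin_cases i <;> fin_cases j <;>
    simp only [miFIM, miSensitivity, Fin.zero_eta, Fin.mk_one, Matrix.of_apply, Matrix.cons_val',
      Matrix.cons_val_zero, Matrix.cons_val_one, Matrix.cons_val_fin_one] <;>
    ring

lemma det_miSensitivity (hr : r ≠ 0) :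
    (miSensitivity f₀ μ₀ r σ).det = 3 * miAlpha f₀ μ₀ σ / (2 * σ) := by
  rw [miSensitivity, Matrix.det_fin_two_of, miBeta]
  field_simp
  ring

lemma miAlpha_pos (hf₀ : 0 < f₀) (hμ₀ : 0 < μ₀) (hσ : 0 < σ) : 0 < miAlpha f₀ μ₀ σ :=
  Real.sqrt_pos.mpr (by positivity)

lemma posDef_miFIM (hα : miAlpha f₀ μ₀ σ ≠ 0) (hr : r ≠ 0) (hγ : 0 < γ) :
    (miFIM f₀ μ₀ r σ γ).PosDef := by
  have hσ : σ ≠ 0 := by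
    rintro rfl
    simp [miAlpha] at hα
  have hdet : (miSensitivity f₀ μ₀ r σ).det ≠ 0 := by
    rw [det_miSensitivity hr]
    positivity
  rw [miFIM_eq_smul_conjTranspose_mul_self]
  exact (Matrix.PosDef.conjTranspose_mul_self _ (Matrix.mulVec_injective_of_det_ne_zero hdet)).smul
    hγ

end FisherMatrix

/-- (Theorem 1, second part) The MI-ISAC FIM is positive definite and the joint
estimation penalties satisfy `Δ_r = Δ_σ = 1/(1 − ρ²) ≥ 1` with `ρ = J₁₂/√(J₁₁·J₂₂)`. -/
theorem stmt_8 (f₀ μ₀ : ℝ) (hf₀ : 0 < f₀) (hμ₀ : 0 < μ₀)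
    (r σ γ : ℝ) (hr : 0 < r) (hσ : 0 < σ) (hγ : 0 < γ)
    (J : Matrix (Fin 2) (Fin 2) ℝ) (hJ : J = miFIM f₀ μ₀ r σ γ)
    (ρ : ℝ) (hρ : ρ = J 0 1 / Real.sqrt (J 0 0 * J 1 1)) :
    J.PosDef ∧
    J 0 0 * (J⁻¹ 0 0) = 1 / (1 - ρ ^ 2) ∧
    J 1 1 * (J⁻¹ 1 1) = 1 / (1 - ρ ^ 2) ∧
    1 ≤ 1 / (1 - ρ ^ 2) := by
  replace hρ : ρ = fisherCorrelation J 0 1 := hρ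
  have hpos : J.PosDef := hJ ▸ posDef_miFIM (miAlpha_pos hf₀ hμ₀ hσ).ne' hr.ne' hγ
  rw [hρ]
  exact ⟨hpos, estimationPenalty_eq_of_posDef hpos 0, estimationPenalty_eq_of_posDef hpos 1,
    one_le_one_div_one_sub_sq_fisherCorrelation hpos⟩
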